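/- Let L, M be differential graded Lie algebras over a field K of characteristic 0, i : L → M a Cartan homotopy with Lie derivative l_a = d_M i_a + i_{d_L a}, and N ⊂ M a differential graded Lie subalgebra with l(L) ⊂ N. Let TW(χ) = { (x, y(t)) ∈ N × M[t,dt] : y(0) = 0, y(1) = x } be the homotopy fibre of the inclusion χ : N ↪ M. Then there is a well-defined L∞ morphism L ⇢ TW(χ) whose linear part is the morphism of complexes a ↦ (l_a, t l_a + dt i_a). -/

import Mathlib

/-!
Basic homotopical algebra of differential graded Lie algebras over a field of
characteristic zero, following [Iacono, "Deformations and obstructions of pairs (X,D)"].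

A differential graded Lie algebra (DGLA) is encoded as a `K`-module together with an
internal `ℤ`-grading (a family of submodules whose direct sum is the whole module),
a differential of degree `+1` squaring to zero, and a bracket which is graded
skew-symmetric, satisfies the graded Jacobi identity and the graded Leibniz rule.
-/

universe u v w

/-- A `ℤ`-graded cochain complex structure on a `K`-module `V`: an internal grading
together with a differential of degree `+1` squaring to zero. -/
structure CochainStruct (K : Type u) [Field K] (V : Type v) [AddCommGroup V] [Module K V] :
    Type (max u v) where
  grading : ℤ → Submodule K V
  isInternal : DirectSum.IsInternal grading
  d : V →ₗ[K] V
  d_degree : ∀ i : ℤ, ∀ x ∈ grading i, d x ∈ grading (i + 1)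
  d_sq : ∀ x : V, d (d x) = 0

namespace CochainStruct

variable {K : Type u} [Field K] {V : Type v} [AddCommGroup V] [Module K V]
  {W : Type w} [AddCommGroup W] [Module K W]

/-- Degree `i` cocycles. -/
def cocycles (c : CochainStruct K V) (i : ℤ) : Submodule K V :=
  c.grading i ⊓ LinearMap.ker c.d

/-- Degree `i` coboundaries, as a submodule of the degree `i` cocycles. -/
def coboundaries (c : CochainStruct K V) (i : ℤ) : Submodule K (c.cocycles i) :=
  Submodule.comap (c.cocycles i).subtype (c.grading i ⊓ LinearMap.range c.d)

/-- The degree `i` cohomology of a graded cochain complex. -/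
def cohomology (c : CochainStruct K V) (i : ℤ) : Type v :=
  c.cocycles i ⧸ c.coboundaries i

instance (c : CochainStruct K V) (i : ℤ) : AddCommGroup (c.cohomology i) :=
  inferInstanceAs (AddCommGroup (c.cocycles i ⧸ c.coboundaries i))

instance (c : CochainStruct K V) (i : ℤ) : Module K (c.cohomology i) :=
  inferInstanceAs (Module K (c.cocycles i ⧸ c.coboundaries i))

end CochainStruct

/-- A (degree zero) morphism of graded cochain complexes. -/
structure CochainMap {K : Type u} [Field K] {V : Type v} {W : Type w}
    [AddCommGroup V] [Module K V] [AddCommGroup W] [Module K W]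
    (c : CochainStruct K V) (c' : CochainStruct K W) : Type (max u v w) where
  toFun : V →ₗ[K] W
  map_grading : ∀ i : ℤ, ∀ x ∈ c.grading i, toFun x ∈ c'.grading i
  map_d : ∀ x : V, toFun (c.d x) = c'.d (toFun x)

namespace CochainMap

variable {K : Type u} [Field K] {V : Type v} {W : Type w}
  [AddCommGroup V] [Module K V] [AddCommGroup W] [Module K W]
  {c : CochainStruct K V} {c' : CochainStruct K W}

/-- The induced map on cocycles. -/
def cocyclesMap (f : CochainMap c c') (i : ℤ) : c.cocycles i →ₗ[K] c'.cocycles i :=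
  f.toFun.restrict (p := c.cocycles i) (q := c'.cocycles i) fun x hx => by
    rcases Submodule.mem_inf.mp hx with ⟨h1, h2⟩
    refine Submodule.mem_inf.mpr ⟨f.map_grading i x h1, ?_⟩
    simp only [LinearMap.mem_ker] at h2 ⊢
    rw [← f.map_d, h2, map_zero]

/-- The induced map in cohomology. -/
def cohMap (f : CochainMap c c') (i : ℤ) :
    c.cohomology i →ₗ[K] c'.cohomology i :=
  Submodule.mapQ (c.coboundaries i) (c'.coboundaries i) (f.cocyclesMap i) (by
    rintro ⟨x, hx⟩ hmem
    simp only [CochainStruct.coboundaries, Submodule.mem_comap] at hmem ⊢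
    rcases Submodule.mem_inf.mp hmem with ⟨h1, h2⟩
    refine Submodule.mem_inf.mpr ⟨?_, ?_⟩
    · exact f.map_grading i x h1
    · rcases h2 with ⟨y, hy⟩
      exact ⟨f.toFun y, by
        have := f.map_d y
        simp only [Submodule.coe_subtype] at hy ⊢
        rw [← this, hy]
        rfl⟩)

end CochainMap

/-- A differential graded Lie algebra structure on a `K`-module `L`:
a graded cochain complex together with a degree zero graded bracket which is
graded skew-symmetric and satisfies the graded Jacobi identity and the graded
Leibniz rule. -/
structure DGLAStruct (K : Type u) [Field K] (L : Type v) [AddCommGroup L] [Module K L]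
    extends CochainStruct K L where
  bracket : L →ₗ[K] L →ₗ[K] L
  bracket_degree : ∀ i j : ℤ, ∀ x ∈ grading i, ∀ y ∈ grading j, bracket x y ∈ grading (i + j)
  bracket_skew : ∀ i j : ℤ, ∀ x ∈ grading i, ∀ y ∈ grading j,
    bracket x y = -(((-1 : K) ^ (i * j)) • bracket y x)
  bracket_jacobi : ∀ i j : ℤ, ∀ x ∈ grading i, ∀ y ∈ grading j, ∀ z : L,
    bracket x (bracket y z) =
      bracket (bracket x y) z + ((-1 : K) ^ (i * j)) • bracket y (bracket x z)
  bracket_leibniz : ∀ i : ℤ, ∀ x ∈ grading i, ∀ y : L,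
    d (bracket x y) = bracket (d x) y + ((-1 : K) ^ i) • bracket x (d y)

/-- A morphism of differential graded Lie algebras. -/
structure DGLAStructHom {K : Type u} [Field K] {L : Type v} {M : Type w}
    [AddCommGroup L] [Module K L] [AddCommGroup M] [Module K M]
    (g : DGLAStruct K L) (h : DGLAStruct K M) : Type (max u v w) where
  toFun : L →ₗ[K] M
  map_grading : ∀ i : ℤ, ∀ x ∈ g.grading i, toFun x ∈ h.grading i
  map_d : ∀ x : L, toFun (g.d x) = h.d (toFun x)
  map_bracket : ∀ x y : L, toFun (g.bracket x y) = h.bracket (toFun x) (toFun y)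

namespace DGLAStructHom

variable {K : Type u} [Field K] {L : Type v} {M : Type w}
  [AddCommGroup L] [Module K L] [AddCommGroup M] [Module K M]
  {g : DGLAStruct K L} {h : DGLAStruct K M}

/-- The underlying morphism of complexes of a morphism of DGLAs. -/
def toCochainMap (f : DGLAStructHom g h) :
    CochainMap g.toCochainStruct h.toCochainStruct :=
  ⟨f.toFun, f.map_grading, f.map_d⟩

/-- A quasi-isomorphism of DGLAs is a morphism inducing bijections in cohomology. -/
def IsQuasiIso (f : DGLAStructHom g h) : Prop :=
  ∀ i : ℤ, Function.Bijective (f.toCochainMap.cohMap i)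

end DGLAStructHom

/-- A bundled differential graded Lie algebra over `K`. -/
structure DGLA (K : Type u) [Field K] : Type (max u (v + 1)) where
  carrier : Type v
  [acg : AddCommGroup carrier]
  [mod : Module K carrier]
  str : DGLAStruct K carrier

attribute [instance] DGLA.acg DGLA.mod

namespace DGLA

variable {K : Type u} [Field K]

/-- Two DGLAs are related if there is a quasi-isomorphism from the first to the second. -/
def qisRel : DGLA.{u, v} K → DGLA.{u, v} K → Prop := fun X Y =>
  ∃ f : DGLAStructHom X.str Y.str, f.IsQuasiIso

/-- Homotopy equivalence of DGLAs: the equivalence relation generated by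
quasi-isomorphisms. -/
def HomotopyEquiv (X Y : DGLA.{u, v} K) : Prop :=
  Relation.EqvGen qisRel X Y

/-- A DGLA is abelian if its bracket is trivial. -/
def IsAbelian (X : DGLA.{u, v} K) : Prop :=
  ∀ x y : X.carrier, X.str.bracket x y = 0

/-- A DGLA is homotopy abelian if it is homotopy equivalent (i.e. quasi-isomorphic,
under the equivalence relation generated by quasi-isomorphisms) to an abelian DGLA. -/
def HomotopyAbelian (X : DGLA.{u, v} K) : Prop :=
  ∃ Y : DGLA.{u, v} K, Y.IsAbelian ∧ X.HomotopyEquiv Y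

end DGLA

/-- A zig-zag of morphisms of DGLAs (the backwards arrows being quasi-isomorphisms):
a morphism in the homotopy category of DGLAs, i.e. an `L∞` morphism of DGLAs. -/
inductive ZigZag {K : Type u} [Field K] : DGLA.{u, v} K → DGLA.{u, v} K → Type (max u (v + 1))
  | refl (X : DGLA.{u, v} K) : ZigZag X X
  | fwd {X Y Z : DGLA.{u, v} K} (f : DGLAStructHom X.str Y.str) (t : ZigZag Y Z) : ZigZag X Z
  | bwd {X Y Z : DGLA.{u, v} K} (f : DGLAStructHom Y.str X.str) (hf : f.IsQuasiIso)
      (t : ZigZag Y Z) : ZigZag X Z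

/-- The map induced in cohomology by a zig-zag of morphisms of DGLAs. -/
noncomputable def ZigZag.cohMap {K : Type u} [Field K] :
    ∀ {X Y : DGLA.{u, v} K}, ZigZag X Y → ∀ i : ℤ,
      X.str.toCochainStruct.cohomology i →ₗ[K] Y.str.toCochainStruct.cohomology i
  | _, _, .refl _, _ => LinearMap.id
  | _, _, .fwd f t, i => (t.cohMap i).comp (f.toCochainMap.cohMap i)
  | _, _, .bwd f hf t, i =>
      (t.cohMap i).comp
        ((LinearEquiv.ofBijective (f.toCochainMap.cohMap i) (hf i)).symm.toLinearMap)

/-!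
The differential graded vector space `M[t,dt] = M ⊗ K[t,dt]` of polynomial differential
forms on the affine line with coefficients in a DGLA `M`, homotopy fibres, and Cartan
homotopies.  An element of `M[t,dt]` is written `p(t) + q(t) dt` and encoded as the pair
of coefficient families `(p, q) : (ℕ →₀ M) × (ℕ →₀ M)`.
-/

/-- `M[t,dt]`: polynomial forms on the affine line with coefficients in `M`,
encoded as pairs `(p, q)` with `p(t) + q(t) dt`. -/
abbrev PolyDt (K : Type u) [Field K] (M : Type v) [AddCommGroup M] [Module K M] : Type v :=
  (ℕ →₀ M) × (ℕ →₀ M)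

section PolyDt

variable {K : Type u} [Field K] {M : Type v} [AddCommGroup M] [Module K M]

/-- Evaluation at `t = 0`, `dt = 0`. -/
noncomputable def evAt0 : PolyDt K M →ₗ[K] M :=
  (Finsupp.lapply 0).comp (LinearMap.fst K (ℕ →₀ M) (ℕ →₀ M))

/-- Evaluation at `t = 1`, `dt = 0`. -/
noncomputable def evAt1 : PolyDt K M →ₗ[K] M :=
  ((Finsupp.lsum K fun _ : ℕ => (LinearMap.id : M →ₗ[K] M)) :
      (ℕ →₀ M) →ₗ[K] M).comp (LinearMap.fst K (ℕ →₀ M) (ℕ →₀ M))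

/-- The element `t^n m` of `M[t,dt]`. -/
noncomputable def inlP (n : ℕ) (m : M) : PolyDt K M := (Finsupp.single n m, 0)

/-- The element `t^n dt m` of `M[t,dt]`. -/
noncomputable def inrP (n : ℕ) (m : M) : PolyDt K M := (0, Finsupp.single n m)

/-- The degree `j` part of `M[t,dt]` (with `t` of degree `0` and `dt` of degree `1`). -/
def polyGrading (h : DGLAStruct K M) (j : ℤ) : Submodule K (PolyDt K M) where
  carrier := {x | (∀ n : ℕ, x.1 n ∈ h.grading j) ∧ ∀ n : ℕ, x.2 n ∈ h.grading (j - 1)}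
  zero_mem' := ⟨fun n => by simp, fun n => by simp⟩
  add_mem' := by
    rintro x y ⟨hx1, hx2⟩ ⟨hy1, hy2⟩
    refine ⟨fun n => ?_, fun n => ?_⟩
    · have : (x + y).1 n = x.1 n + y.1 n := by simp
      rw [this]; exact (h.grading j).add_mem (hx1 n) (hy1 n)
    · have : (x + y).2 n = x.2 n + y.2 n := by simp
      rw [this]; exact (h.grading (j - 1)).add_mem (hx2 n) (hy2 n)
  smul_mem' := by
    rintro c x ⟨hx1, hx2⟩
    refine ⟨fun n => ?_, fun n => ?_⟩
    · have : (c • x).1 n = c • x.1 n := by simp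
      rw [this]; exact (h.grading j).smul_mem c (hx1 n)
    · have : (c • x).2 n = c • x.2 n := by simp
      rw [this]; exact (h.grading (j - 1)).smul_mem c (hx2 n)

/-- The property that a DGLA structure `mt` on `M[t,dt]` is *the* DGLA of polynomial
forms on the affine line with coefficients in `(M, h)`: it is characterised by its
grading and by its differential and bracket on the elements `t^n m` and `t^n dt m`. -/
structure IsPolyFormsDGLA (h : DGLAStruct K M) (mt : DGLAStruct K (PolyDt K M)) : Prop where
  grading_eq : ∀ j : ℤ, mt.grading j = polyGrading h j
  d_inl : ∀ (n : ℕ) (m : M), mt.d (inlP n m) = inlP n (h.d m) + inrP (n - 1) (n • m)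
  d_inr : ∀ (n : ℕ) (m : M), mt.d (inrP n m) = -inrP n (h.d m)
  bracket_ll : ∀ (n n' : ℕ) (m m' : M),
    mt.bracket (inlP n m) (inlP n' m') = inlP (n + n') (h.bracket m m')
  bracket_lr : ∀ i : ℤ, ∀ m ∈ h.grading i, ∀ (n n' : ℕ) (m' : M),
    mt.bracket (inlP n m) (inrP n' m') = ((-1 : K) ^ i) • inrP (n + n') (h.bracket m m')
  bracket_rl : ∀ (n n' : ℕ) (m m' : M),
    mt.bracket (inrP n m) (inlP n' m') = inrP (n + n') (h.bracket m m')
  bracket_rr : ∀ (n n' : ℕ) (m m' : M),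
    mt.bracket (inrP n m) (inrP n' m') = 0

end PolyDt

section Fibre

variable {K : Type u} [Field K] {L : Type v} {M : Type v}
  [AddCommGroup L] [Module K L] [AddCommGroup M] [Module K M]

/-- The underlying module of the homotopy fibre
`TW(χ) = { (l, m(t,dt)) ∈ L × M[t,dt] | m(0,0) = 0, m(1,0) = χ(l) }`
of a morphism of DGLAs `χ : L → M`. -/
noncomputable def fibreSub {g : DGLAStruct K L} {h : DGLAStruct K M}
    (χ : DGLAStructHom g h) : Submodule K (L × PolyDt K M) :=
  LinearMap.ker
    ((evAt0.comp (LinearMap.snd K L (PolyDt K M))).prod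
      ((evAt1.comp (LinearMap.snd K L (PolyDt K M))) -
        χ.toFun.comp (LinearMap.fst K L (PolyDt K M))))

/-- The property that a DGLA structure `tw` on the module underlying the homotopy fibre
of `χ : L → M` is *the* homotopy fibre DGLA: differential, bracket and grading are
computed componentwise from `L` and `M[t,dt]`. -/
structure IsHomotopyFibre {g : DGLAStruct K L} {h : DGLAStruct K M}
    (χ : DGLAStructHom g h) (mt : DGLAStruct K (PolyDt K M))
    (tw : DGLAStruct K ↥(fibreSub χ)) : Prop where
  grading_eq : ∀ i : ℤ, tw.grading i =
    Submodule.comap (fibreSub χ).subtype ((g.grading i).prod (mt.grading i))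
  d_eq : ∀ v : fibreSub χ, (tw.d v : L × PolyDt K M) =
    (g.d (v : L × PolyDt K M).1, mt.d (v : L × PolyDt K M).2)
  bracket_eq : ∀ v w : fibreSub χ, (tw.bracket v w : L × PolyDt K M) =
    (g.bracket (v : L × PolyDt K M).1 (w : L × PolyDt K M).1,
      mt.bracket (v : L × PolyDt K M).2 (w : L × PolyDt K M).2)

end Fibre

/-- A Cartan homotopy between differential graded Lie algebras: a degree `-1` linear
map `i : L → M` such that `i_{[a,b]} = [i_a, d_M i_b]` and `[i_a, i_b] = 0`. -/
structure CartanHomotopy {K : Type u} [Field K] {L : Type v} {M : Type w}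
    [AddCommGroup L] [Module K L] [AddCommGroup M] [Module K M]
    (g : DGLAStruct K L) (h : DGLAStruct K M) : Type (max u v w) where
  toFun : L →ₗ[K] M
  map_grading : ∀ i : ℤ, ∀ x ∈ g.grading i, toFun x ∈ h.grading (i - 1)
  cartan_bracket : ∀ a b : L, toFun (g.bracket a b) = h.bracket (toFun a) (h.d (toFun b))
  cartan_square : ∀ a b : L, h.bracket (toFun a) (toFun b) = 0

set_option linter.unusedSectionVars false

section Aux

theorem aux_grading_induction {K : Type u} [Field K] {V : Type v} [AddCommGroup V] [Module K V]
    (c : CochainStruct K V) (T : Submodule K V)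
    (hT : ∀ i : ℤ, ∀ x ∈ c.grading i, x ∈ T) (x : V) : x ∈ T := by
  have h := c.isInternal.submodule_iSup_eq_top
  have h2 : (⊤ : Submodule K V) ≤ T := by
    rw [← h]
    exact iSup_le fun i x hx => hT i x hx
  exact h2 trivial

theorem aux_ext_hom {K : Type u} [Field K] {V : Type v} [AddCommGroup V] [Module K V]
    {W : Type w} [AddCommGroup W] [Module K W]
    (c : CochainStruct K V) (f g : V →ₗ[K] W)
    (hT : ∀ i : ℤ, ∀ x ∈ c.grading i, f x = g x) (x : V) : f x = g x :=
  aux_grading_induction c (LinearMap.eqLocus f g) hT x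

theorem aux_reflect {K : Type u} [Field K] {V : Type v} [AddCommGroup V] [Module K V]
    {W : Type w} [AddCommGroup W] [Module K W]
    (c : CochainStruct K V) (c' : CochainStruct K W) (f : V →ₗ[K] W)
    (hf : Function.Injective f) (hg : ∀ i : ℤ, ∀ x ∈ c.grading i, f x ∈ c'.grading i)
    (p : ℤ) (x : V) (hx : f x ∈ c'.grading p) : x ∈ c.grading p := by
  have h : x ∈ ⨆ i, c.grading i := by
    rw [c.isInternal.submodule_iSup_eq_top]; trivial
  rw [iSup_split_single _ p] at h
  obtain ⟨y, hy, z, hz, rfl⟩ := Submodule.mem_sup.mp h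
  have h1 : f z ∈ ⨆ (i) (_ : i ≠ p), c'.grading i := by
    have : (⨆ (i) (_ : i ≠ p), c.grading i) ≤
        Submodule.comap f (⨆ (i) (_ : i ≠ p), c'.grading i) :=
      iSup₂_le fun i hi w hw => Submodule.mem_comap.mpr
        (Submodule.mem_iSup_of_mem i (Submodule.mem_iSup_of_mem hi (hg i w hw)))
    exact this hz
  have h2 : f z ∈ c'.grading p := by
    have h3 := (c'.grading p).sub_mem hx (hg p y hy)
    simpa using h3
  have h4 : f z = 0 :=
    Submodule.disjoint_def.mp (c'.isInternal.submodule_iSupIndep p) _ h2 h1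
  have h5 : z = 0 := hf (by rw [h4, map_zero])
  simpa [h5] using hy

variable {K : Type u} [Field K] [CharZero K]
    {L M : Type u} [AddCommGroup L] [Module K L] [AddCommGroup M] [Module K M]
    {gL : DGLAStruct K L} {gM : DGLAStruct K M}

/-- The Lie derivative. -/
def auxLie (ci : CartanHomotopy gL gM) : L →ₗ[K] M :=
  gM.d.comp ci.toFun + ci.toFun.comp gL.d

theorem aux_il (ci : CartanHomotopy gL gM) (a b : L) :
    gM.bracket (ci.toFun a) (auxLie ci b) = ci.toFun (gL.bracket a b) := by
  simp [auxLie, ci.cartan_bracket, ci.cartan_square]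

theorem aux_li (ci : CartanHomotopy gL gM) (p : ℤ) (a : L) (ha : a ∈ gL.grading p) (b : L) :
    gM.bracket (auxLie ci a) (ci.toFun b) = ((-1 : K) ^ p) • ci.toFun (gL.bracket a b) := by
  have h := gM.bracket_leibniz (p - 1) (ci.toFun a) (ci.map_grading p a ha) (ci.toFun b)
  rw [ci.cartan_square, map_zero, ← ci.cartan_bracket, zpow_sub₀ (by simp)] at h
  simp only [auxLie, LinearMap.add_apply, LinearMap.comp_apply, map_add, ci.cartan_square, add_zero]
  rw [eq_comm, add_eq_zero_iff_eq_neg] at h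
  rw [h, ← neg_smul]
  congr 1
  rw [zpow_one, div_neg, div_one, neg_neg]

theorem aux_dl (ci : CartanHomotopy gL gM) (a : L) :
    gM.d (auxLie ci a) = auxLie ci (gL.d a) := by
  simp [auxLie, gM.d_sq, gL.d_sq]

theorem aux_ll (ci : CartanHomotopy gL gM) (a b : L) :
    gM.bracket (auxLie ci a) (auxLie ci b) = auxLie ci (gL.bracket a b) := by
  refine aux_ext_hom gL.toCochainStruct
    ((gM.bracket.flip (auxLie ci b)).comp (auxLie ci)) ((auxLie ci).comp (gL.bracket.flip b))
    ?_ a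
  intro p x hx
  simp only [LinearMap.comp_apply, LinearMap.flip_apply]
  have h := gM.bracket_leibniz (p - 1) (ci.toFun x) (ci.map_grading p x hx) (auxLie ci b)
  have h2 : auxLie ci (gL.bracket x b) =
    gM.d (ci.toFun (gL.bracket x b)) + ci.toFun (gL.d (gL.bracket x b)) := rfl
  have h3 : auxLie ci x = gM.d (ci.toFun x) + ci.toFun (gL.d x) := rfl
  rw [h2, gL.bracket_leibniz p x hx, ← aux_il, h, map_add, map_smul, ← aux_il, ← aux_il, aux_dl,
    h3, map_add, LinearMap.add_apply, zpow_sub₀ (by simp)]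
  simp only [zpow_one, div_neg, div_one, neg_smul]
  abel

theorem aux_l_grading (ci : CartanHomotopy gL gM) (p : ℤ) (a : L) (ha : a ∈ gL.grading p) :
    auxLie ci a ∈ gM.grading p := by
  refine Submodule.add_mem _ ?_ ?_
  · have := gM.d_degree _ _ (ci.map_grading p a ha)
    simpa using this
  · have := ci.map_grading _ _ (gL.d_degree p a ha)
    simpa using this

/-- The elements `a u^(n+1)`. -/
noncomputable def auxE (ci : CartanHomotopy gL gM) (n : ℕ) : L →ₗ[K] L × PolyDt K M :=
  LinearMap.prod LinearMap.id
    (LinearMap.prod ((Finsupp.lsingle (n + 1)).comp (auxLie ci))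
      ((Finsupp.lsingle n).comp ((n + 1 : ℕ) • ci.toFun)))

/-- The elements `a w u^n`. -/
noncomputable def auxG (ci : CartanHomotopy gL gM) (n : ℕ) : L →ₗ[K] L × PolyDt K M :=
  LinearMap.prod 0
    (LinearMap.prod (LinearMap.comp (Finsupp.lsingle (n + 2) - Finsupp.lsingle (n + 1)) ci.toFun) 0)

theorem auxE_apply (ci : CartanHomotopy gL gM) (n : ℕ) (a : L) :
    auxE ci n a = (a, (inlP (n + 1) (auxLie ci a) + inrP n ((n + 1 : ℕ) • ci.toFun a) :
      PolyDt K M)) := by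
  ext <;> simp [auxE, inlP, inrP]

theorem auxG_apply (ci : CartanHomotopy gL gM) (n : ℕ) (a : L) :
    auxG ci n a = (0, (inlP (n + 2) (ci.toFun a) - inlP (n + 1) (ci.toFun a) :
      PolyDt K M)) := by
  ext <;> simp [auxG, inlP]

/-- The submodule underlying the resolution of `L`. -/
noncomputable def auxS (ci : CartanHomotopy gL gM) : Submodule K (L × PolyDt K M) :=
  Submodule.span K ({x | ∃ n a, x = auxE ci n a} ∪ {x | ∃ n a, x = auxG ci n a})

theorem auxE_mem (ci : CartanHomotopy gL gM) (n : ℕ) (a : L) : auxE ci n a ∈ auxS ci :=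
  Submodule.subset_span (Or.inl ⟨n, a, rfl⟩)

theorem auxG_mem (ci : CartanHomotopy gL gM) (n : ℕ) (a : L) : auxG ci n a ∈ auxS ci :=
  Submodule.subset_span (Or.inr ⟨n, a, rfl⟩)

theorem auxS_le (ci : CartanHomotopy gL gM) (T : Submodule K (L × PolyDt K M))
    (hE : ∀ n a, auxE ci n a ∈ T) (hG : ∀ n a, auxG ci n a ∈ T) : auxS ci ≤ T := by
  refine Submodule.span_le.mpr ?_
  rintro x (⟨n, a, rfl⟩ | ⟨n, a, rfl⟩)
  · exact hE n a
  · exact hG n a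

/-- Componentwise differential. -/
noncomputable def auxD (gL : DGLAStruct K L) (mt : DGLAStruct K (PolyDt K M)) :
    L × PolyDt K M →ₗ[K] L × PolyDt K M :=
  LinearMap.prodMap gL.d mt.d

/-- Componentwise bracket. -/
noncomputable def auxB (gL : DGLAStruct K L) (mt : DGLAStruct K (PolyDt K M)) :
    L × PolyDt K M →ₗ[K] L × PolyDt K M →ₗ[K] L × PolyDt K M :=
  LinearMap.mk₂ K (fun x y => (gL.bracket x.1 y.1, mt.bracket x.2 y.2))
    (by intros; simp) (by intros; simp) (by intros; simp) (by intros; simp)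

theorem auxB_apply (mt : DGLAStruct K (PolyDt K M)) (x y : L × PolyDt K M) :
    auxB gL mt x y = (gL.bracket x.1 y.1, mt.bracket x.2 y.2) := rfl

theorem aux_inlP_sub (n : ℕ) (x y : M) :
    (inlP n (x - y) : PolyDt K M) = inlP n x - inlP n y := by
  simp [inlP]

theorem aux_inlP_add (n : ℕ) (x y : M) :
    (inlP n (x + y) : PolyDt K M) = inlP n x + inlP n y := by
  simp [inlP]

theorem aux_inrP_add (n : ℕ) (x y : M) :
    (inrP n (x + y) : PolyDt K M) = inrP n x + inrP n y := by
  simp [inrP]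

theorem aux_inlP_smul (n : ℕ) (k : K) (x : M) :
    (inlP n (k • x) : PolyDt K M) = k • inlP n x := by
  simp [inlP]

theorem aux_inrP_smul (n : ℕ) (k : K) (x : M) :
    (inrP n (k • x) : PolyDt K M) = k • inrP n x := by
  simp [inrP]

theorem aux_inrP_nsmul (n : ℕ) (k : ℕ) (x : M) :
    (inrP n (k • x) : PolyDt K M) = k • inrP n x := by
  simp [inrP]

theorem aux_inlP_zero (n : ℕ) : (inlP n (0 : M) : PolyDt K M) = 0 := by simp [inlP]

theorem aux_inrP_zero (n : ℕ) : (inrP n (0 : M) : PolyDt K M) = 0 := by simp [inrP]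

theorem auxD_E (ci : CartanHomotopy gL gM) {mt : DGLAStruct K (PolyDt K M)}
    (hmt : IsPolyFormsDGLA gM mt) (n : ℕ) (a : L) :
    auxD gL mt (auxE ci n a) = auxE ci n (gL.d a) := by
  rw [auxE_apply, auxE_apply]
  refine Prod.ext rfl ?_
  change mt.d (inlP (n + 1) (auxLie ci a) + inrP n ((n + 1 : ℕ) • ci.toFun a)) =
    inlP (n + 1) (auxLie ci (gL.d a)) + inrP n ((n + 1 : ℕ) • ci.toFun (gL.d a))
  rw [map_add, hmt.d_inl, hmt.d_inr, aux_dl]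
  simp only [aux_inrP_nsmul, Nat.add_sub_cancel, map_nsmul]
  have h : auxLie ci a = gM.d (ci.toFun a) + ci.toFun (gL.d a) := rfl
  rw [h, aux_inrP_add]
  simp only [smul_add]
  abel

theorem auxD_G (ci : CartanHomotopy gL gM) {mt : DGLAStruct K (PolyDt K M)}
    (hmt : IsPolyFormsDGLA gM mt) (n : ℕ) (a : L) :
    auxD gL mt (auxG ci n a) = auxE ci (n + 1) a - auxE ci n a - auxG ci n (gL.d a) := by
  rw [auxE_apply, auxE_apply, auxG_apply, auxG_apply]
  refine Prod.ext (by simp [auxD]) ?_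
  change mt.d (inlP (n + 2) (ci.toFun a) - inlP (n + 1) (ci.toFun a)) =
    (inlP (n + 1 + 1) (auxLie ci a) + inrP (n + 1) ((n + 1 + 1 : ℕ) • ci.toFun a)) -
      (inlP (n + 1) (auxLie ci a) + inrP n ((n + 1 : ℕ) • ci.toFun a)) -
      (inlP (n + 2) (ci.toFun (gL.d a)) - inlP (n + 1) (ci.toFun (gL.d a)))
  rw [map_sub, hmt.d_inl, hmt.d_inl]
  have h : auxLie ci a = gM.d (ci.toFun a) + ci.toFun (gL.d a) := rfl
  simp only [h, aux_inlP_add]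
  simp only [Nat.add_sub_cancel, show n + 2 - 1 = n + 1 from rfl, show n + 1 + 1 = n + 2 from rfl]
  abel

theorem auxB_EE (ci : CartanHomotopy gL gM) {mt : DGLAStruct K (PolyDt K M)}
    (hmt : IsPolyFormsDGLA gM mt) (n m : ℕ) (a b : L) :
    auxB gL mt (auxE ci n a) (auxE ci m b) = auxE ci (n + m + 1) (gL.bracket a b) := by
  refine aux_ext_hom gL.toCochainStruct
    (((auxB gL mt).flip (auxE ci m b)).comp (auxE ci n))
    ((auxE ci (n + m + 1)).comp (gL.bracket.flip b)) ?_ a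
  intro p x hx
  simp only [LinearMap.comp_apply, LinearMap.flip_apply]
  simp only [auxE_apply, auxB_apply]
  refine Prod.ext rfl ?_
  simp only [map_add, LinearMap.add_apply, hmt.bracket_ll, hmt.bracket_rl, hmt.bracket_rr,
    hmt.bracket_lr p _ (aux_l_grading ci p x hx), aux_ll, map_nsmul, LinearMap.smul_apply,
    aux_il, aux_li ci p x hx, aux_inrP_nsmul, aux_inrP_smul, add_zero, smul_zero]
  have e1 : ((-1 : K) ^ p) * ((-1 : K) ^ p) = 1 := by
    rw [← mul_zpow]; simp
  rw [smul_smul ((-1 : K) ^ p), e1, one_smul]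
  rw [show n + 1 + (m + 1) = n + m + 1 + 1 by ring, show n + 1 + m = n + m + 1 by ring,
    show n + (m + 1) = n + m + 1 by ring, add_assoc, ← add_smul]
  congr 2
  ring

theorem auxB_EG (ci : CartanHomotopy gL gM) {mt : DGLAStruct K (PolyDt K M)}
    (hmt : IsPolyFormsDGLA gM mt) (n m : ℕ) (a b : L) :
    auxB gL mt (auxE ci n a) (auxG ci m b) ∈ auxS ci := by
  refine aux_grading_induction gL.toCochainStruct
    (Submodule.comap (((auxB gL mt).flip (auxG ci m b)).comp (auxE ci n)) (auxS ci)) ?_ a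
  intro p x hx
  simp only [Submodule.mem_comap, LinearMap.comp_apply, LinearMap.flip_apply]
  have : auxB gL mt (auxE ci n x) (auxG ci m b) =
      ((-1 : K) ^ p) • auxG ci (n + m + 1) (gL.bracket x b) := by
    simp only [auxE_apply, auxG_apply, auxB_apply]
    refine Prod.ext (by simp) ?_
    simp only [map_add, map_sub, LinearMap.add_apply, hmt.bracket_ll, hmt.bracket_rl,
      aux_li ci p x hx, map_nsmul, LinearMap.smul_apply, ci.cartan_square, smul_zero,
      aux_inrP_zero, aux_inlP_smul, Prod.smul_snd, smul_sub, add_zero, sub_zero]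
    rw [show n + 1 + (m + 1) = n + m + 1 + 1 by ring, show n + 1 + (m + 2) = n + m + 1 + 2 by ring]
  rw [this]
  exact Submodule.smul_mem _ _ (auxG_mem _ _ _)

theorem auxB_GE (ci : CartanHomotopy gL gM) {mt : DGLAStruct K (PolyDt K M)}
    (hmt : IsPolyFormsDGLA gM mt) (n m : ℕ) (a b : L) :
    auxB gL mt (auxG ci n a) (auxE ci m b) ∈ auxS ci := by
  refine aux_grading_induction gL.toCochainStruct
    (Submodule.comap (((auxB gL mt).flip (auxE ci m b)).comp (auxG ci n)) (auxS ci)) ?_ a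
  intro p x hx
  simp only [Submodule.mem_comap, LinearMap.comp_apply, LinearMap.flip_apply]
  have : auxB gL mt (auxG ci n x) (auxE ci m b) =
      auxG ci (n + m + 1) (gL.bracket x b) := by
    simp only [auxE_apply, auxG_apply, auxB_apply]
    refine Prod.ext (by simp) ?_
    simp only [map_add, map_sub, LinearMap.sub_apply, hmt.bracket_ll,
      hmt.bracket_lr _ _ (ci.map_grading p x hx),
      aux_il, map_nsmul, LinearMap.smul_apply, ci.cartan_square, smul_zero,
      aux_inrP_zero, add_zero, sub_zero]
    rw [show n + 1 + (m + 1) = n + m + 1 + 1 by ring, show n + 2 + (m + 1) = n + m + 1 + 2 by ring]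
  rw [this]
  exact auxG_mem _ _ _

theorem auxB_GG (ci : CartanHomotopy gL gM) {mt : DGLAStruct K (PolyDt K M)}
    (hmt : IsPolyFormsDGLA gM mt) (n m : ℕ) (a b : L) :
    auxB gL mt (auxG ci n a) (auxG ci m b) = 0 := by
  simp only [auxG_apply, auxB_apply]
  refine Prod.ext (by simp) ?_
  simp [hmt.bracket_ll, ci.cartan_square, aux_inlP_zero]

theorem auxS_d (ci : CartanHomotopy gL gM) {mt : DGLAStruct K (PolyDt K M)}
    (hmt : IsPolyFormsDGLA gM mt) (x : L × PolyDt K M) (hx : x ∈ auxS ci) :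
    auxD gL mt x ∈ auxS ci := by
  refine auxS_le ci (Submodule.comap (auxD gL mt) (auxS ci)) ?_ ?_ hx
  · intro n a
    rw [Submodule.mem_comap, auxD_E ci hmt]
    exact auxE_mem _ _ _
  · intro n a
    rw [Submodule.mem_comap, auxD_G ci hmt]
    exact Submodule.sub_mem _ (Submodule.sub_mem _ (auxE_mem _ _ _) (auxE_mem _ _ _))
      (auxG_mem _ _ _)

theorem auxS_b (ci : CartanHomotopy gL gM) {mt : DGLAStruct K (PolyDt K M)}
    (hmt : IsPolyFormsDGLA gM mt) (x : L × PolyDt K M) (hx : x ∈ auxS ci)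
    (y : L × PolyDt K M) (hy : y ∈ auxS ci) :
    auxB gL mt x y ∈ auxS ci := by
  refine auxS_le ci (Submodule.comap ((auxB gL mt).flip y) (auxS ci)) ?_ ?_ hx
  · intro n a
    refine auxS_le ci (Submodule.comap (auxB gL mt (auxE ci n a)) (auxS ci)) ?_ ?_ hy
    · intro m b
      rw [Submodule.mem_comap, auxB_EE ci hmt]
      exact auxE_mem _ _ _
    · intro m b
      exact auxB_EG ci hmt _ _ _ _
  · intro n a
    refine auxS_le ci (Submodule.comap (auxB gL mt (auxG ci n a)) (auxS ci)) ?_ ?_ hy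
    · intro m b
      exact auxB_GE ci hmt _ _ _ _
    · intro m b
      rw [Submodule.mem_comap, auxB_GG ci hmt]
      exact Submodule.zero_mem _

/-- The grading on the resolution. -/
noncomputable def auxGr (ci : CartanHomotopy gL gM) (mt : DGLAStruct K (PolyDt K M)) (i : ℤ) :
    Submodule K (auxS ci) :=
  Submodule.comap (auxS ci).subtype ((gL.grading i).prod (mt.grading i))

theorem aux_inlP_mem {mt : DGLAStruct K (PolyDt K M)}
    (hmt : IsPolyFormsDGLA gM mt) (n : ℕ) (p : ℤ) (m : M) (hm : m ∈ gM.grading p) :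
    (inlP n m : PolyDt K M) ∈ mt.grading p := by
  rw [hmt.grading_eq]
  refine ⟨fun k => ?_, fun k => ?_⟩
  · simp only [inlP, Finsupp.single_apply]
    split_ifs
    · exact hm
    · exact Submodule.zero_mem _
  · simp [inlP]

theorem aux_inrP_mem {mt : DGLAStruct K (PolyDt K M)}
    (hmt : IsPolyFormsDGLA gM mt) (n : ℕ) (p : ℤ) (m : M) (hm : m ∈ gM.grading (p - 1)) :
    (inrP n m : PolyDt K M) ∈ mt.grading p := by
  rw [hmt.grading_eq]
  refine ⟨fun k => ?_, fun k => ?_⟩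
  · simp [inrP]
  · simp only [inrP, Finsupp.single_apply]
    split_ifs
    · exact hm
    · exact Submodule.zero_mem _

theorem auxE_gr (ci : CartanHomotopy gL gM) {mt : DGLAStruct K (PolyDt K M)}
    (hmt : IsPolyFormsDGLA gM mt) (n : ℕ) (p : ℤ) (a : L) (ha : a ∈ gL.grading p) :
    auxE ci n a ∈ (gL.grading p).prod (mt.grading p) := by
  rw [auxE_apply]
  refine ⟨ha, Submodule.add_mem _ (aux_inlP_mem hmt _ _ _ (aux_l_grading ci p a ha))
    (aux_inrP_mem hmt _ _ _ ?_)⟩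
  exact Submodule.smul_of_tower_mem _ _ (ci.map_grading p a ha)

theorem auxG_gr (ci : CartanHomotopy gL gM) {mt : DGLAStruct K (PolyDt K M)}
    (hmt : IsPolyFormsDGLA gM mt) (n : ℕ) (p : ℤ) (a : L) (ha : a ∈ gL.grading p) :
    auxG ci n a ∈ (gL.grading (p - 1)).prod (mt.grading (p - 1)) := by
  rw [auxG_apply]
  exact ⟨Submodule.zero_mem _, Submodule.sub_mem _
    (aux_inlP_mem hmt _ _ _ (ci.map_grading p a ha))
    (aux_inlP_mem hmt _ _ _ (ci.map_grading p a ha))⟩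

theorem auxGr_internal (ci : CartanHomotopy gL gM) {mt : DGLAStruct K (PolyDt K M)}
    (hmt : IsPolyFormsDGLA gM mt) : DirectSum.IsInternal (auxGr ci mt) := by
  rw [DirectSum.isInternal_submodule_iff_iSupIndep_and_iSup_eq_top]
  constructor
  · intro p
    rw [Submodule.disjoint_def]
    intro x hx hx'
    have h1 : (⨆ (j) (_ : j ≠ p), auxGr ci mt j) ≤
        Submodule.comap ((LinearMap.fst K L (PolyDt K M)).comp (auxS ci).subtype)
          (⨆ (j) (_ : j ≠ p), gL.grading j) :=
      iSup₂_le fun i hi w hw => Submodule.mem_comap.mpr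
        (Submodule.mem_iSup_of_mem i (Submodule.mem_iSup_of_mem hi hw.1))
    have h2 : (⨆ (j) (_ : j ≠ p), auxGr ci mt j) ≤
        Submodule.comap ((LinearMap.snd K L (PolyDt K M)).comp (auxS ci).subtype)
          (⨆ (j) (_ : j ≠ p), mt.grading j) :=
      iSup₂_le fun i hi w hw => Submodule.mem_comap.mpr
        (Submodule.mem_iSup_of_mem i (Submodule.mem_iSup_of_mem hi hw.2))
    have h3 := Submodule.disjoint_def.mp (gL.isInternal.submodule_iSupIndep p) _ hx.1 (h1 hx')
    have h4 := Submodule.disjoint_def.mp (mt.isInternal.submodule_iSupIndep p) _ hx.2 (h2 hx')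
    exact Subtype.ext (Prod.ext h3 h4)
  · have h : auxS ci ≤ Submodule.map (auxS ci).subtype (⨆ i, auxGr ci mt i) := by
      refine auxS_le ci _ ?_ ?_
      · intro n a
        refine aux_grading_induction gL.toCochainStruct 
          (Submodule.comap (auxE ci n)
            (Submodule.map (auxS ci).subtype (⨆ i, auxGr ci mt i))) ?_ a
        intro p x hx
        exact ⟨⟨auxE ci n x, auxE_mem _ _ _⟩,
          Submodule.mem_iSup_of_mem p (auxE_gr ci hmt n p x hx), rfl⟩
      · intro n a
        refine aux_grading_induction gL.toCochainStruct 
          (Submodule.comap (auxG ci n)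
            (Submodule.map (auxS ci).subtype (⨆ i, auxGr ci mt i))) ?_ a
        intro p x hx
        exact ⟨⟨auxG ci n x, auxG_mem _ _ _⟩,
          Submodule.mem_iSup_of_mem (p - 1) (auxG_gr ci hmt n p x hx), rfl⟩
    rw [eq_top_iff]
    rintro ⟨x, hx⟩ -
    obtain ⟨y, hy, hyx⟩ := h hx
    have : y = ⟨x, hx⟩ := Subtype.ext hyx
    rwa [← this]

/-- The resolution of `L`. -/
noncomputable def auxStr (ci : CartanHomotopy gL gM) {mt : DGLAStruct K (PolyDt K M)}
    (hmt : IsPolyFormsDGLA gM mt) : DGLAStruct K (auxS ci) where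
  grading := auxGr ci mt
  isInternal := auxGr_internal ci hmt
  d := (auxD gL mt).restrict (auxS_d ci hmt)
  d_degree := fun i x hx => ⟨gL.d_degree i _ hx.1, mt.d_degree i _ hx.2⟩
  d_sq := fun x => Subtype.ext (Prod.ext (gL.d_sq _) (mt.d_sq _))
  bracket := LinearMap.mk₂ K
    (fun x y => ⟨auxB gL mt x.1 y.1, auxS_b ci hmt _ x.2 _ y.2⟩)
    (by intros; apply Subtype.ext; simp) (by intros; apply Subtype.ext; simp)
    (by intros; apply Subtype.ext; simp) (by intros; apply Subtype.ext; simp)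
  bracket_degree := fun i j x hx y hy =>
    ⟨gL.bracket_degree i j _ hx.1 _ hy.1, mt.bracket_degree i j _ hx.2 _ hy.2⟩
  bracket_skew := fun i j x hx y hy => Subtype.ext
    (Prod.ext (gL.bracket_skew i j _ hx.1 _ hy.1) (mt.bracket_skew i j _ hx.2 _ hy.2))
  bracket_jacobi := fun i j x hx y hy z => Subtype.ext
    (Prod.ext (gL.bracket_jacobi i j _ hx.1 _ hy.1 _) (mt.bracket_jacobi i j _ hx.2 _ hy.2 _))
  bracket_leibniz := fun i x hx y => Subtype.ext
    (Prod.ext (gL.bracket_leibniz i _ hx.1 _) (mt.bracket_leibniz i _ hx.2 _))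

/-- The projection of the resolution to `L`. -/
noncomputable def auxP (ci : CartanHomotopy gL gM) {mt : DGLAStruct K (PolyDt K M)}
    (hmt : IsPolyFormsDGLA gM mt) : DGLAStructHom (auxStr ci hmt) gL where
  toFun := (LinearMap.fst K L (PolyDt K M)).comp (auxS ci).subtype
  map_grading := fun _ _ hx => hx.1
  map_d := fun _ => rfl
  map_bracket := fun _ _ => rfl

/-- The linear section. -/
noncomputable def auxSec (ci : CartanHomotopy gL gM) {mt : DGLAStruct K (PolyDt K M)}
    (hmt : IsPolyFormsDGLA gM mt) :
    CochainMap gL.toCochainStruct (auxStr ci hmt).toCochainStruct where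
  toFun := (auxE ci 0).codRestrict (auxS ci) (auxE_mem ci 0)
  map_grading := fun p x hx => auxE_gr ci hmt 0 p x hx
  map_d := fun x => Subtype.ext (auxD_E ci hmt 0 x).symm

/-- Normal form of elements. -/
noncomputable def auxEF (ci : CartanHomotopy gL gM) : (ℕ →₀ L) →ₗ[K] L × PolyDt K M :=
  Finsupp.lsum K (auxE ci)

/-- Normal form of elements. -/
noncomputable def auxGF (ci : CartanHomotopy gL gM) : (ℕ →₀ L) →ₗ[K] L × PolyDt K M :=
  Finsupp.lsum K (auxG ci)

theorem auxGF_mem (ci : CartanHomotopy gL gM) (h : ℕ →₀ L) : auxGF ci h ∈ auxS ci := by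
  induction h using Finsupp.induction_linear with
  | zero => simp
  | add f g hf hg => rw [map_add]; exact Submodule.add_mem _ hf hg
  | single n a => simpa [auxGF] using auxG_mem ci n a

theorem auxGF_form (ci : CartanHomotopy gL gM) (k : ℕ →₀ L) :
    (auxGF ci k).1 = 0 ∧ (auxGF ci k).2.1 0 = 0 ∧ (auxGF ci k).2.2 = 0 := by
  induction k using Finsupp.induction_linear with
  | zero => simp
  | add f g hf hg => simp [hf, hg]
  | single n a => simp [auxGF, auxG]

theorem auxS_normal (ci : CartanHomotopy gL gM) {mt : DGLAStruct K (PolyDt K M)}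
    (hmt : IsPolyFormsDGLA gM mt) (x : L × PolyDt K M) (hx : x ∈ auxS ci) :
    ∃ h k : ℕ →₀ L, x = auxE ci 0 x.1 + auxD gL mt (auxGF ci h) + auxGF ci k := by
  let T : Submodule K (L × PolyDt K M) :=
    LinearMap.range (auxE ci 0) ⊔ LinearMap.range ((auxD gL mt).comp (auxGF ci)) ⊔
      LinearMap.range (auxGF ci)
  have hG : ∀ n a, auxG ci n a ∈ LinearMap.range (auxGF ci) := fun n a =>
    ⟨Finsupp.single n a, by simp [auxGF]⟩
  have hGT : ∀ n a, auxG ci n a ∈ T := fun n a => Submodule.mem_sup_right (hG n a)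
  have hDT : ∀ n a, auxD gL mt (auxG ci n a) ∈ T := fun n a =>
    Submodule.mem_sup_left (Submodule.mem_sup_right ⟨Finsupp.single n a, by simp [auxGF]⟩)
  have hT : auxS ci ≤ T := by
    refine auxS_le ci T ?_ hGT
    intro n a
    induction n with
    | zero => exact Submodule.mem_sup_left (Submodule.mem_sup_left ⟨a, rfl⟩)
    | succ n ih =>
      have h1 := auxD_G ci hmt n a
      have h2 : auxE ci (n + 1) a =
          auxD gL mt (auxG ci n a) + auxE ci n a + auxG ci n (gL.d a) := by
        rw [h1]; abel
      rw [h2]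
      exact T.add_mem (T.add_mem (hDT n a) ih) (hGT n _)
  obtain ⟨y, hy, z, ⟨k, rfl⟩, rfl⟩ := Submodule.mem_sup.mp (hT hx)
  obtain ⟨_, ⟨a, rfl⟩, _, ⟨h, rfl⟩, rfl⟩ := Submodule.mem_sup.mp hy
  have hg : ∀ k, (auxGF ci k).1 = 0 := fun k => (auxGF_form ci k).1
  refine ⟨h, k, ?_⟩
  have : (auxE ci 0 a + (auxD gL mt ∘ₗ auxGF ci) h + auxGF ci k).1 = a := by
    simp [hg, auxD, auxE_apply]
  rw [this]
  rfl

theorem aux_mt_d {mt : DGLAStruct K (PolyDt K M)}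
    (hmt : IsPolyFormsDGLA gM mt) (κ : ℕ →₀ M) (n : ℕ) :
    (mt.d (κ, 0)).2 n = (n + 1) • κ (n + 1) := by
  induction κ using Finsupp.induction_linear with
  | zero =>
    rw [show ((0 : ℕ →₀ M), (0 : ℕ →₀ M)) = (0 : PolyDt K M) from rfl, map_zero]; simp
  | add f g hf hg =>
    have : ((f + g : ℕ →₀ M), (0 : ℕ →₀ M)) = ((f, 0) + (g, 0) : PolyDt K M) := by simp
    rw [this, map_add]
    simp [hf, hg]
  | single m a =>
    have := hmt.d_inl m a
    simp only [inlP] at this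
    rw [this]
    rcases m with _ | m
    · simp [inrP]
    · by_cases h : m = n
      · subst h; simp [inrP]
      · simp [inrP, Finsupp.single_apply, h]

theorem aux_closed (ci : CartanHomotopy gL gM) {mt : DGLAStruct K (PolyDt K M)}
    (hmt : IsPolyFormsDGLA gM mt) (k : ℕ →₀ L) (hk : auxD gL mt (auxGF ci k) = 0) :
    auxGF ci k = 0 := by
  obtain ⟨h1, h2, h3⟩ := auxGF_form ci k
  have h4 : mt.d (auxGF ci k).2 = 0 := congrArg Prod.snd hk
  have h5 : (auxGF ci k).2 = ((auxGF ci k).2.1, 0) := Prod.ext rfl h3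
  rw [h5] at h4
  refine Prod.ext h1 (Prod.ext (Finsupp.ext fun n => ?_) h3)
  rcases n with _ | n
  · exact h2
  · have h6 := aux_mt_d hmt (auxGF ci k).2.1 n
    rw [h4] at h6
    have h7 : ((n + 1 : ℕ) : K) • (auxGF ci k).2.1 (n + 1) = 0 := by
      rw [Nat.cast_smul_eq_nsmul]; exact h6.symm
    rcases smul_eq_zero.mp h7 with h | h
    · exact absurd h (Nat.cast_ne_zero.mpr (Nat.succ_ne_zero n))
    · exact h

theorem auxP_quasi (ci : CartanHomotopy gL gM) {mt : DGLAStruct K (PolyDt K M)}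
    (hmt : IsPolyFormsDGLA gM mt) : (auxP ci hmt).IsQuasiIso := by
  intro i
  constructor
  · rw [← LinearMap.ker_eq_bot, LinearMap.ker_eq_bot']
    intro c hc
    obtain ⟨⟨⟨x, hxS⟩, hx⟩, rfl⟩ := Submodule.Quotient.mk_surjective _ c
    have hc2 := (Submodule.Quotient.mk_eq_zero _).mp hc
    obtain ⟨-, z, hz⟩ := Submodule.mem_inf.mp (Submodule.mem_comap.mp hc2)
    have hz' : gL.d z = x.1 := hz
    obtain ⟨hx1, hx2⟩ := Submodule.mem_inf.mp hx
    have hx3 : auxD gL mt x = 0 := congrArg Subtype.val (LinearMap.mem_ker.mp hx2)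
    obtain ⟨h, k, hhk⟩ := auxS_normal ci hmt x hxS
    have hdd : ∀ y, auxD gL mt (auxD gL mt y) = 0 := fun y =>
      Prod.ext (gL.d_sq _) (mt.d_sq _)
    have hE : auxE ci 0 x.1 = auxD gL mt (auxE ci 0 z) := by rw [auxD_E ci hmt, hz']
    have hk : auxGF ci k = 0 := by
      apply aux_closed ci hmt
      rw [hhk, map_add, map_add, hdd, hE, hdd] at hx3
      simpa using hx3
    refine (Submodule.Quotient.mk_eq_zero _).mpr
      (Submodule.mem_comap.mpr (Submodule.mem_inf.mpr ⟨hx1, ?_⟩))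
    refine ⟨⟨auxE ci 0 z + auxGF ci h,
      Submodule.add_mem _ (auxE_mem _ _ _) (auxGF_mem _ _)⟩, Subtype.ext ?_⟩
    change auxD gL mt (auxE ci 0 z + auxGF ci h) = x
    rw [map_add, ← hE]
    conv_rhs => rw [hhk, hk, add_zero]
  · intro c
    obtain ⟨x, rfl⟩ := Submodule.Quotient.mk_surjective _ c
    exact ⟨(auxSec ci hmt).cohMap i (Submodule.Quotient.mk x), rfl⟩

end Aux

/-- Let `L, M` be differential graded Lie algebras over a field `K`
of characteristic `0`, `i : L → M` a Cartan homotopy with Lie derivative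
`l_a = d_M i_a + i_{d_L a}`, and `N ⊂ M` a differential graded Lie subalgebra (encoded
as an injective morphism `χ : N → M`) with `l(L) ⊂ N` (encoded by the lift `lN` of `l`
along `χ`).  Let `TW(χ) = { (x, y(t)) ∈ N × M[t,dt] : y(0) = 0, y(1) = x }` be the
homotopy fibre of the inclusion `χ : N ↪ M`.  Then there is a well-defined `L∞` morphism
`L ⇢ TW(χ)` whose linear part is the morphism of complexes
`a ↦ (l_a, t l_a + dt i_a)`. -/
theorem cartan_homotopy_gives_linfty_to_fibre {K : Type u} [Field K] [CharZero K]
    {L N M : Type u} [AddCommGroup L] [Module K L] [AddCommGroup N] [Module K N]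
    [AddCommGroup M] [Module K M]
    {gL : DGLAStruct K L} {gN : DGLAStruct K N} {gM : DGLAStruct K M}
    (ci : CartanHomotopy gL gM)
    (χ : DGLAStructHom gN gM) (hχ : Function.Injective χ.toFun)
    (lN : L →ₗ[K] N)
    (hlN : ∀ a : L, χ.toFun (lN a) = gM.d (ci.toFun a) + ci.toFun (gL.d a))
    (mt : DGLAStruct K (PolyDt K M)) (hmt : IsPolyFormsDGLA gM mt)
    (tw : DGLAStruct K ↥(fibreSub χ)) (htw : IsHomotopyFibre χ mt tw) :
    ∃ ψ : CochainMap gL.toCochainStruct tw.toCochainStruct,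
      (∀ a : L, (ψ.toFun a : N × PolyDt K M) =
        (lN a,
          (Finsupp.single 1 (gM.d (ci.toFun a) + ci.toFun (gL.d a)),
            Finsupp.single 0 (ci.toFun a)))) ∧
      ∃ zz : ZigZag (DGLA.mk (K := K) L gL) (DGLA.mk (K := K) ↥(fibreSub χ) tw),
        ∀ i : ℤ, zz.cohMap i = ψ.cohMap i := by
  have hl : ∀ a, χ.toFun (lN a) = auxLie ci a := hlN
  have hlb : ∀ a b, lN (gL.bracket a b) = gN.bracket (lN a) (lN b) := fun a b => hχ (by
    rw [hl, χ.map_bracket, hl, hl, aux_ll])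
  have hld : ∀ a, lN (gL.d a) = gN.d (lN a) := fun a => hχ (by
    rw [hl, χ.map_d, hl, aux_dl])
  have hlg : ∀ p, ∀ a ∈ gL.grading p, lN a ∈ gN.grading p := fun p a ha =>
    aux_reflect gN.toCochainStruct gM.toCochainStruct χ.toFun hχ χ.map_grading p _ (by
      rw [hl]; exact aux_l_grading ci p a ha)
  let F0 : L × PolyDt K M →ₗ[K] N × PolyDt K M := LinearMap.prodMap lN LinearMap.id
  have hF0 : auxS ci ≤ Submodule.comap F0 (fibreSub χ) := by
    refine auxS_le ci _ ?_ ?_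
    · intro n a
      simp [F0, fibreSub, auxE, evAt0, evAt1, hl]
    · intro n a
      simp [F0, fibreSub, auxG, evAt0, evAt1, Finsupp.sum_sub_index]
  let F : DGLAStructHom (auxStr ci hmt) tw :=
    { toFun := F0.restrict hF0
      map_grading := fun p x hx => by
        rw [htw.grading_eq]
        exact ⟨hlg p _ hx.1, hx.2⟩
      map_d := fun x => Subtype.ext (by
        rw [htw.d_eq]
        exact Prod.ext (hld _) rfl)
      map_bracket := fun x y => Subtype.ext (by
        rw [htw.bracket_eq]
        exact Prod.ext (hlb _ _) rfl) }
  let ψ : CochainMap gL.toCochainStruct tw.toCochainStruct :=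
    { toFun := F.toFun.comp (auxSec ci hmt).toFun
      map_grading := fun p x hx => F.map_grading p _ ((auxSec ci hmt).map_grading p x hx)
      map_d := fun x => by
        rw [LinearMap.comp_apply, (auxSec ci hmt).map_d, LinearMap.comp_apply]
        exact F.map_d _ }
  refine ⟨ψ, ?_, ?_⟩
  · intro a
    change (lN a, (auxE ci 0 a).2) = _
    refine Prod.ext rfl ?_
    simp [auxE, auxLie]
  · refine ⟨ZigZag.bwd (Y := DGLA.mk (K := K) (auxS ci) (auxStr ci hmt)) (auxP ci hmt)
      (auxP_quasi ci hmt) (ZigZag.fwd F (ZigZag.refl _)), ?_⟩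
    intro i
    refine LinearMap.ext fun c => ?_
    have h1 : (LinearEquiv.ofBijective ((auxP ci hmt).toCochainMap.cohMap i)
        (auxP_quasi ci hmt i)).symm c = (auxSec ci hmt).cohMap i c := by
      rw [LinearEquiv.symm_apply_eq]
      obtain ⟨x, rfl⟩ := Submodule.Quotient.mk_surjective _ c
      rfl
    change F.toCochainMap.cohMap i ((LinearEquiv.ofBijective ((auxP ci hmt).toCochainMap.cohMap i)
        (auxP_quasi ci hmt i)).symm c) = _
    rw [h1]
    obtain ⟨x, rfl⟩ := Submodule.Quotient.mk_surjective _ c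
    rfl
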